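/- arXiv:1212.6621 — 3 statements merged into one kernel-verified Lean document; each statement's English description precedes it below -/
import Mathlib

section
/- Let Λ be a lattice in ℂ and let z₁, z₂ ∈ ℂ ∖ Λ. Then ℘(z₁; Λ) = ℘(z₂; Λ) if and only if z₁ ≡ z₂ (mod Λ) or z₁ ≡ −z₂ (mod Λ). -/
/-!
The nontrivial direction is proved without counting zeros of elliptic functions, from the
differential equation alone. Suppose `℘ a = ℘ b` with `a, b ∉ Λ`. Then `℘'² = 4℘³ - g₂℘ - g₃` gives
`℘' a = ± ℘' b`, and after replacing `b` by `-b` (`℘` is even and `℘'` is odd) the sign may be taken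
to be `+`. Both `z ↦ ℘ z` and `z ↦ ℘ (z + (b - a))` satisfy `f'' = 6 f² - g₂/2`
(`PeriodPair.deriv_derivWeierstrassP`) with the same value and derivative at `a`, so they agree near
`a` (`eventuallyEq_of_deriv_deriv_eq`). Off a closed countable set, whose complement is connected,
both are analytic, so they agree there too. The pole of `℘` at `0` then forces a pole at `b - a`,
that is `b - a ∈ Λ` (`PeriodPair.sub_mem_lattice_of_eq`).

The converse is periodicity and evenness. Mathlib's theory of `PeriodPair.weierstrassP` provides
these facts; `PeriodPair.wp_eq_weierstrassP` identifies it with `wp`.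
-/

open scoped Real

/-- The point `a ω₁ + b ω₂` of the lattice spanned by `ω₁, ω₂`. -/
noncomputable def latticePt (ω₁ ω₂ : ℂ) (p : ℤ × ℤ) : ℂ := p.1 * ω₁ + p.2 * ω₂

/-- The Weierstrass ℘-function relative to the lattice `ℤω₁ + ℤω₂`:
`℘(z;Λ) = 1/z² + Σ_{ω ∈ Λ∖{0}} (1/(z−ω)² − 1/ω²)`. -/
noncomputable def wp (ω₁ ω₂ z : ℂ) : ℂ :=
  1 / z ^ 2 + ∑' p : {p : ℤ × ℤ // p ≠ 0},
    (1 / (z - latticePt ω₁ ω₂ p.1) ^ 2 - 1 / latticePt ω₁ ω₂ p.1 ^ 2)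

/-- `℘_{[r,s]}(τ) = ℘(rτ + s; [τ,1])`. -/
noncomputable def wprs (r s : ℚ) (τ : ℂ) : ℂ := wp τ 1 ((r : ℂ) * τ + (s : ℂ))

/-- `q^x := e^{2πixτ}`. -/
noncomputable def qpow (τ : ℂ) (x : ℝ) : ℂ := Complex.exp (2 * (π : ℂ) * Complex.I * (x : ℂ) * τ)

/-- The Siegel function `g_{[r,s]}(τ)`. -/
noncomputable def siegel (r s : ℚ) (τ : ℂ) : ℂ :=
  -qpow τ ((1/2) * ((r : ℝ) ^ 2 - (r : ℝ) + 1/6)) *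
    Complex.exp ((π : ℂ) * Complex.I * (s : ℂ) * ((r : ℂ) - 1)) *
    (1 - qpow τ (r : ℝ) * Complex.exp (2 * (π : ℂ) * Complex.I * (s : ℂ))) *
    ∏' n : ℕ, ((1 - qpow τ ((n + 1 : ℝ) + (r : ℝ)) * Complex.exp (2 * (π : ℂ) * Complex.I * (s : ℂ))) *
      (1 - qpow τ ((n + 1 : ℝ) - (r : ℝ)) * Complex.exp (-(2 * (π : ℂ) * Complex.I * (s : ℂ)))))

/-- The Dedekind eta function with the paper's normalization
`η(τ) = √(2π) e^{πi/4} q^{1/24} ∏_{n≥1} (1 − qⁿ)`. -/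
noncomputable def eta (τ : ℂ) : ℂ :=
  (Real.sqrt (2 * π) : ℂ) * Complex.exp ((π : ℂ) * Complex.I / 4) * qpow τ (1/24) *
    ∏' n : ℕ, (1 - qpow τ (n + 1 : ℝ))

/-- `g₂(τ) = 60 Σ_{ω ∈ [τ,1]∖{0}} ω⁻⁴`. -/
noncomputable def g2 (τ : ℂ) : ℂ := 60 * ∑' p : {p : ℤ × ℤ // p ≠ 0}, 1 / latticePt τ 1 p.1 ^ 4

/-- `g₃(τ) = 140 Σ_{ω ∈ [τ,1]∖{0}} ω⁻⁶`. -/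
noncomputable def g3 (τ : ℂ) : ℂ := 140 * ∑' p : {p : ℤ × ℤ // p ≠ 0}, 1 / latticePt τ 1 p.1 ^ 6

/-- The elliptic modular function `j(τ) = 1728 g₂(τ)³ / (g₂(τ)³ − 27 g₃(τ)²)`. -/
noncomputable def jfun (τ : ℂ) : ℂ := 1728 * g2 τ ^ 3 / (g2 τ ^ 3 - 27 * g3 τ ^ 2)

/-- The Weierstrass unit `h_{m,n}(τ)`. -/
noncomputable def hweier (m n : ℕ) (τ : ℂ) : ℂ :=
  (wprs 0 (1 / (m * n : ℚ)) τ - wprs (1 / (m : ℚ)) 0 τ) /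
    (wprs 0 (1 / (m : ℚ)) τ - wprs (1 / (m : ℚ)) 0 τ)

open scoped Topology in
/-- Local uniqueness for the second-order equation `f'' = 6 f² - c` with prescribed value and
derivative at `x`. The difference `h` of two solutions satisfies `h'' = 6 (f + g) h`, so
`h''` vanishes at `x` at least to the order of `h`; but each differentiation of a function that
vanishes at `x` lowers a finite order by one, so the order of `h` is infinite. -/
lemma eventuallyEq_of_deriv_deriv_eq {f g : ℂ → ℂ} {x c : ℂ}
    (hf : AnalyticAt ℂ f x) (hg : AnalyticAt ℂ g x)
    (hf2 : ∀ᶠ z in 𝓝 x, deriv (deriv f) z = 6 * f z ^ 2 - c)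
    (hg2 : ∀ᶠ z in 𝓝 x, deriv (deriv g) z = 6 * g z ^ 2 - c)
    (h0 : f x = g x) (h1 : deriv f x = deriv g x) : f =ᶠ[𝓝 x] g := by
  have hh : AnalyticAt ℂ (f - g) x := hf.sub hg
  have hd1 : deriv (f - g) =ᶠ[𝓝 x] deriv f - deriv g := by
    filter_upwards [hf.eventually_analyticAt, hg.eventually_analyticAt] with z hz hz'
    simpa using deriv_sub hz.differentiableAt hz'.differentiableAt
  have hd2 : deriv (deriv (f - g)) =ᶠ[𝓝 x] (fun z => 6 * (f z + g z)) * (f - g) := by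
    filter_upwards [hf.deriv.eventually_analyticAt, hg.deriv.eventually_analyticAt,
      hd1.eventuallyEq_nhds, hf2, hg2] with z hz hz' hz1 hz2 hz3
    rw [hz1.deriv_eq, deriv_sub hz.differentiableAt hz'.differentiableAt, hz2, hz3]
    simp only [Pi.mul_apply, Pi.sub_apply]
    ring
  have e1 := hh.analyticOrderAt_deriv_add_one
  have e2 := hh.deriv.analyticOrderAt_deriv_add_one
  have v1 : deriv (f - g) x = 0 := by
    simpa [h1] using hd1.eq_of_nhds
  simp only [v1, sub_zero] at e2
  simp only [Pi.sub_apply, h0, sub_self, sub_zero] at e1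
  rw [analyticOrderAt_congr hd2, analyticOrderAt_mul (by fun_prop) hh] at e2
  have top : analyticOrderAt (f - g) x = ⊤ := by
    change _ = analyticOrderAt (f - g) x at e1
    change _ = analyticOrderAt (deriv (f - g)) x at e2
    rw [← e2] at e1
    by_contra hne
    obtain ⟨n, hn⟩ := ENat.ne_top_iff_exists.1 hne
    rw [← hn] at e1
    generalize analyticOrderAt (fun z => 6 * (f z + g z)) x = k at e1
    cases k with
    | top => simp at e1
    | coe k =>
      norm_cast at e1
      omega
  filter_upwards [analyticOrderAt_eq_top.1 top] with z hz
  simpa [sub_eq_zero] using hz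

namespace PeriodPair

open Filter
open scoped Topology

variable (L : PeriodPair)

lemma countable_lattice : (L.lattice : Set ℂ).Countable := by
  have : Countable L.lattice := L.latticeEquivProd.toEquiv.countable_iff.2 inferInstance
  exact Set.to_countable _

lemma isPreconnected_compl_of_countable {s : Set ℂ} (hs : s.Countable) : IsPreconnected sᶜ :=
  (hs.isPathConnected_compl_of_one_lt_rank
    (by simp [Complex.rank_real_complex])).isConnected.isPreconnected

lemma isOpen_compl_lattice : IsOpen (L.lattice : Set ℂ)ᶜ := L.isClosed_lattice.isOpen_compl

lemma eventually_notMem_lattice : ∀ᶠ z in 𝓝[≠] (0 : ℂ), z ∉ L.lattice := by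
  filter_upwards [mem_nhdsWithin_of_mem_nhds (L.compl_lattice_sdiff_singleton_mem_nhds 0),
    self_mem_nhdsWithin] with z hz hz0 hl
  exact hz ⟨hl, hz0⟩

/-- Because of its pole at `0`, `℘` agrees with no function analytic at `0`, even away from `0`. -/
lemma not_eventuallyEq_of_analyticAt {f : ℂ → ℂ} (hf : AnalyticAt ℂ f 0) :
    ¬ L.weierstrassP =ᶠ[𝓝[≠] 0] f := by
  intro h
  have h1 := hf.meromorphicOrderAt_nonneg
  rw [← meromorphicOrderAt_congr h, L.order_weierstrassP 0 (zero_mem _)] at h1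
  exact absurd h1 (by decide)

/-- Differentiating `℘'² = 4℘³ - g₂℘ - g₃` gives `℘' · (2℘'' - 12℘² + g₂) = 0`. The analytic
functions on the connected set `ℂ ∖ Λ` have no zero divisors, and `℘'` is not identically zero. -/
lemma deriv_derivWeierstrassP {z : ℂ} (hz : z ∉ L.lattice) :
    deriv L.derivWeierstrassP z = 6 * L.weierstrassP z ^ 2 - L.g₂ / 2 := by
  have hP := L.analyticOnNhd_weierstrassP
  have hP' := L.analyticOnNhd_derivWeierstrassP
  have hconn := isPreconnected_compl_of_countable L.countable_lattice
  have hprod : ∀ w ∈ (L.lattice : Set ℂ)ᶜ, L.derivWeierstrassP w *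
      (2 * deriv L.derivWeierstrassP w - 12 * L.weierstrassP w ^ 2 + L.g₂) = 0 := by
    intro w hw
    have d1 : HasDerivAt L.weierstrassP (L.derivWeierstrassP w) w := by
      rw [← L.deriv_weierstrassP]
      exact (hP w hw).differentiableAt.hasDerivAt
    have d2 := (hP' w hw).differentiableAt.hasDerivAt
    have hev : (fun z => L.derivWeierstrassP z ^ 2) =ᶠ[𝓝 w]
        fun z => 4 * L.weierstrassP z ^ 3 - L.g₂ * L.weierstrassP z - L.g₃ := by
      filter_upwards [L.isOpen_compl_lattice.mem_nhds hw] with u hu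
      exact L.derivWeierstrassP_sq u hu
    have e := hev.deriv_eq
    rw [(d2.fun_pow 2).deriv,
      ((((d1.fun_pow 3).const_mul 4).fun_sub (d1.const_mul L.g₂)).sub_const L.g₃).deriv] at e
    push_cast at e
    linear_combination e
  have hQ : AnalyticOnNhd ℂ
      (fun w => 2 * deriv L.derivWeierstrassP w - 12 * L.weierstrassP w ^ 2 + L.g₂)
      (L.lattice : Set ℂ)ᶜ := by
    intro w hw
    have a1 := hP w hw
    have a2 := (hP' w hw).deriv
    fun_prop
  rcases AnalyticOnNhd.eq_zero_or_eq_zero_of_mul_eq_zero hP' hQ hprod hconn with h | h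
  · exfalso
    -- If `℘'` vanished identically, `℘` would be constant, hence without a pole at `0`.
    have hc : ∀ w ∈ (L.lattice : Set ℂ)ᶜ, L.weierstrassP w = L.weierstrassP z := by
      intro w hw
      exact L.isOpen_compl_lattice.is_const_of_deriv_eq_zero hconn
        L.differentiableOn_weierstrassP (fun u hu => by simpa using h u hu) hw hz
    refine L.not_eventuallyEq_of_analyticAt (f := fun _ => L.weierstrassP z) analyticAt_const ?_
    filter_upwards [L.eventually_notMem_lattice] with w hw using hc w hw
  · linear_combination h z hz / 2

/-- If `℘` and `℘'` take the same values at `a` and `b`, then `z ↦ ℘ z` and `z ↦ ℘ (z + (b - a))`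
solve the same initial value problem at `a`. By the identity theorem they agree off a countable
set, so `b - a` must be a pole of `℘`. -/
lemma sub_mem_lattice_of_eq {a b : ℂ} (ha : a ∉ L.lattice) (hb : b ∉ L.lattice)
    (h0 : L.weierstrassP a = L.weierstrassP b)
    (h1 : L.derivWeierstrassP a = L.derivWeierstrassP b) : b - a ∈ L.lattice := by
  by_contra hd
  set d := b - a with hd_def
  have hb' : a + d = b := by ring
  let f : ℂ → ℂ := fun z => L.weierstrassP (z + d)
  have hP := L.analyticOnNhd_weierstrassP
  have hf : ∀ z, z + d ∉ L.lattice → AnalyticAt ℂ f z := fun z hz =>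
    (hP (z + d) hz).comp_of_eq (f := fun z => z + d) (by fun_prop) rfl
  have hdf : deriv f = fun z => L.derivWeierstrassP (z + d) := by
    ext z
    rw [← L.deriv_weierstrassP]
    exact deriv_comp_add_const ..
  have hloc : L.weierstrassP =ᶠ[𝓝 a] f := by
    refine eventuallyEq_of_deriv_deriv_eq (c := L.g₂ / 2) (hP a ha) (hf a (by rwa [hb'])) ?_ ?_
      ?_ ?_
    · filter_upwards [L.isOpen_compl_lattice.mem_nhds ha] with z hz
      rw [L.deriv_weierstrassP, L.deriv_derivWeierstrassP hz]
    · have : ∀ᶠ z in 𝓝 a, z + d ∉ L.lattice :=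
        (continuous_id.add continuous_const).continuousAt.eventually_mem
          (L.isOpen_compl_lattice.mem_nhds (by simpa [hb'] using hb))
      filter_upwards [this] with z hz
      rw [hdf, deriv_comp_add_const, L.deriv_derivWeierstrassP hz]
    · simp only [f, hb', h0]
    · rw [hdf, L.deriv_weierstrassP]
      simp only [hb', h1]
  let s : Set ℂ := L.lattice ∪ (fun z => z + d) ⁻¹' L.lattice
  have hs : s.Countable := L.countable_lattice.union
    (L.countable_lattice.preimage (add_left_injective d))
  have heq : Set.EqOn L.weierstrassP f sᶜ := by
    refine AnalyticOnNhd.eqOn_of_preconnected_of_eventuallyEq (z₀ := a)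
      (fun z hz => hP z fun h => hz (Or.inl h)) (fun z hz => hf z fun h => hz (Or.inr h))
      (isPreconnected_compl_of_countable hs) ?_ hloc
    rintro (h | h)
    · exact ha h
    · exact hb (by simpa [hb'] using h)
  refine L.not_eventuallyEq_of_analyticAt (hf 0 (by simpa using hd)) ?_
  have h2 : ∀ᶠ z in 𝓝 (0 : ℂ), z + d ∉ L.lattice :=
    (continuous_id.add continuous_const).continuousAt.eventually_mem
      (L.isOpen_compl_lattice.mem_nhds (by simpa using hd))
  filter_upwards [L.eventually_notMem_lattice, mem_nhdsWithin_of_mem_nhds h2] with z hz hz'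
  exact heq (by rintro (h | h) <;> contradiction)

/-- By the differential equation, equal values of `℘` force `℘' a = ± ℘' b`; the sign is absorbed
by the parity of `℘` and `℘'`. -/
lemma weierstrassP_eq_iff {a b : ℂ} (ha : a ∉ L.lattice) (hb : b ∉ L.lattice) :
    L.weierstrassP a = L.weierstrassP b ↔ a - b ∈ L.lattice ∨ a + b ∈ L.lattice := by
  constructor
  · intro h
    have hsq : L.derivWeierstrassP a ^ 2 = L.derivWeierstrassP b ^ 2 := by
      rw [L.derivWeierstrassP_sq a ha, L.derivWeierstrassP_sq b hb, h]
    rcases sq_eq_sq_iff_eq_or_eq_neg.1 hsq with h' | h'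
    · exact Or.inl (L.sub_mem_lattice_of_eq hb ha h.symm h'.symm)
    · refine Or.inr ?_
      simpa using L.sub_mem_lattice_of_eq (a := -b) (b := a) (by simpa using hb) ha
        (by simpa using h.symm) (by simpa using h'.symm)
  · rintro (h | h)
    · simpa using (L.weierstrassP_add_coe b ⟨_, h⟩)
    · simpa using (L.weierstrassP_add_coe (-b) ⟨_, h⟩)

/-- In Mathlib's `℘` the principal part `1 / z²` is the summand at `0 ∈ Λ`, where the correction
`1 / 0²` is `0`. -/
lemma wp_eq_weierstrassP (z : ℂ) : wp L.ω₁ L.ω₂ z = L.weierstrassP z := by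
  have hs := L.latticeEquivProd.symm.toEquiv.hasSum_iff.2 (L.hasSum_weierstrassP z)
  have key := hs.summable.sum_add_tsum_subtype_compl {(0 : ℤ × ℤ)}
  rw [hs.tsum_eq] at key
  rw [← key, wp, Finset.sum_singleton]
  congr 1
  · simp
  · rw [← (Equiv.subtypeEquivRight (p := fun p : ℤ × ℤ => p ≠ 0)
      (q := fun p => p ∉ ({0} : Finset (ℤ × ℤ))) (fun p => by simp)).tsum_eq]
    refine tsum_congr fun p => ?_
    simp [latticePt, L.latticeEquiv_symm_apply]

end PeriodPair

theorem wp_eq_iff_pm_congruent_mod_lattice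
    (ω₁ ω₂ : ℂ) (hindep : LinearIndependent ℝ ![ω₁, ω₂])
    (z₁ z₂ : ℂ)
    (h₁ : ¬ ∃ a b : ℤ, z₁ = (a : ℂ) * ω₁ + (b : ℂ) * ω₂)
    (h₂ : ¬ ∃ a b : ℤ, z₂ = (a : ℂ) * ω₁ + (b : ℂ) * ω₂) :
    wp ω₁ ω₂ z₁ = wp ω₁ ω₂ z₂ ↔
      ((∃ a b : ℤ, z₁ - z₂ = (a : ℂ) * ω₁ + (b : ℂ) * ω₂) ∨
        (∃ a b : ℤ, z₁ + z₂ = (a : ℂ) * ω₁ + (b : ℂ) * ω₂)) := by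
  let L : PeriodPair := ⟨ω₁, ω₂, hindep⟩
  have hmem : ∀ x : ℂ, x ∈ L.lattice ↔ ∃ a b : ℤ, x = (a : ℂ) * ω₁ + (b : ℂ) * ω₂ := fun x => by
    simp only [PeriodPair.mem_lattice, eq_comm, L]
  simp only [← hmem] at h₁ h₂ ⊢
  rw [← L.weierstrassP_eq_iff h₁ h₂, ← L.wp_eq_weierstrassP, ← L.wp_eq_weierstrassP]
end

section
/- For every τ in the complex upper half-plane ℍ, the modular discriminant Δ(τ) = g₂(τ)³ − 27·g₃(τ)² is nonzero. -/
/-!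
The normalised Eisenstein series `E₄`, `E₆` satisfy `E₄³ - E₆² = 1728 η²⁴`, because the left side is
a level one cusp form of weight 12 and the space of those is spanned by `η²⁴`; and `η` has no zero on
`ℍ` by its product formula. Here `η` is `q^{1/24} ∏ (1 - qⁿ)`, without the
constant in `eta` below. Both facts are in Mathlib (`discriminant_eq_E₄_cube_sub_E₆_sq` and
`ModularForm.discriminant_ne_zero`). The lattice sums of weight `k` are `2 ζ(k) E_k`, so
`ζ(4) = π⁴/90` and `ζ(6) = π⁶/945` give `g₂ = (4π⁴/3) E₄` and `g₃ = (8π⁶/27) E₆`. Hence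
`g₂³ - 27 g₃² = (2π)¹² η²⁴`, which does not vanish.
-/

open scoped Real

/-- The lattice sum of weight `k` over nonzero lattice points is `2 ζ(k)` times the normalised
Eisenstein series, the factor `ζ(k)` coming from sorting the pairs `(m, n)` by their gcd. -/
lemma tsum_latticePt_eq_zeta_mul_E {k : ℕ} (hk : 3 ≤ k) (τ : UpperHalfPlane) :
    ∑' p : {p : ℤ × ℤ // p ≠ 0}, 1 / latticePt τ 1 p.1 ^ k
      = 2 * riemannZeta k * ModularForm.E hk τ := by
  -- The origin may be added to the sum, since its term has the junk value `1 / 0 ^ k = 0`.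
  have hsub : Function.support (fun p : ℤ × ℤ ↦ 1 / latticePt τ 1 p ^ k) ⊆ {p | p ≠ 0} := by
    rintro p hp rfl
    apply hp
    simp [latticePt, show k ≠ 0 by omega]
  have hE : ModularForm.E hk τ = 1 / 2 * eisensteinSeries (N := 1) 0 k τ := rfl
  calc ∑' p : {p : ℤ × ℤ // p ≠ 0}, 1 / latticePt τ 1 p.1 ^ k
      = ∑' p : ℤ × ℤ, 1 / latticePt τ 1 p ^ k := tsum_subtype_eq_of_support_subset hsub
    _ = ∑' v : Fin 2 → ℤ, EisensteinSeries.eisSummand k v τ := by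
        rw [← (finTwoArrowEquiv ℤ).tsum_eq]
        simp [latticePt, EisensteinSeries.eisSummand]
    _ = 2 * riemannZeta k * ModularForm.E hk τ := by
        rw [tsum_eisSummand_eq_riemannZeta_mul_eisensteinSeries hk, hE]
        ring

lemma riemannZeta_six : riemannZeta 6 = (π : ℂ) ^ 6 / 945 := by
  have h := riemannZeta_two_mul_nat (k := 3) (by norm_num)
  norm_num [show bernoulli 6 = 1 / 42 by decide +kernel, Nat.factorial] at h
  rw [h]
  ring

lemma g2_eq_E₄ (τ : UpperHalfPlane) : g2 τ = 4 * (π : ℂ) ^ 4 / 3 * ModularForm.E₄ τ := by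
  have h := riemannZeta_four
  rw [g2, tsum_latticePt_eq_zeta_mul_E (by norm_num : 3 ≤ 4)]
  push_cast
  rw [h]
  ring

lemma g3_eq_E₆ (τ : UpperHalfPlane) : g3 τ = 8 * (π : ℂ) ^ 6 / 27 * ModularForm.E₆ τ := by
  rw [g3, tsum_latticePt_eq_zeta_mul_E (by norm_num : 3 ≤ 6)]
  push_cast
  rw [riemannZeta_six]
  ring

theorem discriminant_ne_zero (τ : UpperHalfPlane) :
    g2 τ ^ 3 - 27 * g3 τ ^ 2 ≠ 0 := by
  have hΔ := ModularForm.discriminant_eq_E₄_cube_sub_E₆_sq τ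
  have key : g2 τ ^ 3 - 27 * g3 τ ^ 2 = (2 * (π : ℂ)) ^ 12 * ModularForm.discriminant τ := by
    rw [g2_eq_E₄, g3_eq_E₆, hΔ]
    ring
  rw [key]
  have hπ : (π : ℂ) ≠ 0 := mod_cast Real.pi_ne_zero
  exact mul_ne_zero (pow_ne_zero _ (mul_ne_zero two_ne_zero hπ))
    (ModularForm.discriminant_ne_zero τ)
end

section
/- Let (a,b), (c,d) ∈ ℚ² ∖ ℤ² be such that (a,b) ≢ (c,d) (mod ℤ²) and (a,b) ≢ (−c,−d) (mod ℤ²). Then for every τ in the upper half-plane ℍ: ℘_{[a,b]}(τ) − ℘_{[c,d]}(τ) = − g_{[a+c, b+d]}(τ) · g_{[a−c, b−d]}(τ) · η(τ)⁴ / ( g_{[a,b]}(τ)² · g_{[c,d]}(τ)² ). -/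
/-!
With `e(z) = e^{2πiz}`, `q = e(τ)` and `u = e(z)`, let
`θ(z) = (1 - u) ∏_{n ≥ 1} (1 - qⁿ u)(1 - qⁿ u⁻¹)` (`thetaProd`). It is entire, vanishes only on the
lattice `ℤτ + ℤ`, has period `1`, and satisfies `θ(z + τ) = -e(-z) θ(z) = θ(-z)`. Up to
constants and exponential factors, `g_{[r,s]}(τ)` is `θ(rτ + s)` (`siegel_eq`), and `η(τ)⁴` is
`∏_{n ≥ 1} (1 - qⁿ)⁴` (`eta_eq`).

The heart of the matter is `weierstrassP_sub`. For fixed `w` off the lattice, both `℘(z) - ℘(w)` and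
`G(z) = θ(z + w) θ(z - w) / θ(z)²` are even elliptic functions of `z` with at most double poles, and
only at lattice points. For the constant `C` that matches their `1/z²` coefficients at `0`, the
difference `H(z) = ℘(z) - ℘(w) - C G(z)` has no `1/z²` term, and by evenness no `1/z` term, so it is
constant by Liouville's theorem (`elliptic_eq`). Since `H(w) = 0`, it vanishes identically. The value
of `C` comes from `θ'(0) = -2πi ∏_{n ≥ 1} (1 - qⁿ)²`. The location of the zeros of `℘(z) - ℘(w)` is
not needed.

The theorem follows by comparing exponential factors.
-/


open scoped Real

open Topology

/-! ### The exponential `z ↦ e^{2πiz}` -/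

/-- `e(z) = e^{2πiz}`; thus `q = e(τ)` and `q^x = e(xτ)`. -/
noncomputable def eexp (z : ℂ) : ℂ := Complex.exp (2 * π * Complex.I * z)

lemma eexp_add (z w : ℂ) : eexp (z + w) = eexp z * eexp w := by
  simp only [eexp, mul_add, Complex.exp_add]

lemma eexp_neg (z : ℂ) : eexp (-z) = (eexp z)⁻¹ := by
  simp only [eexp, mul_neg, Complex.exp_neg]

lemma eexp_ne_zero (z : ℂ) : eexp z ≠ 0 := Complex.exp_ne_zero _

lemma eexp_zero : eexp 0 = 1 := by simp [eexp]

lemma eexp_one : eexp 1 = 1 := by simp [eexp, Complex.exp_two_pi_mul_I]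

lemma eexp_nat_mul (n : ℕ) (z : ℂ) : eexp (n * z) = eexp z ^ n := by
  rw [eexp, eexp, ← Complex.exp_nat_mul]
  ring_nf

lemma eexp_eq_one {z : ℂ} (h : eexp z = 1) : ∃ n : ℤ, z = n := by
  obtain ⟨n, hn⟩ := Complex.exp_eq_one_iff.mp h
  exact ⟨n, mul_left_cancel₀ Complex.two_pi_I_ne_zero (by rw [hn]; ring)⟩

lemma norm_eexp_lt_one {τ : ℂ} (hτ : 0 < τ.im) : ‖eexp τ‖ < 1 := by
  rw [eexp, Complex.norm_exp, Real.exp_lt_one_iff]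
  have : (2 * π * Complex.I * τ).re = -(2 * π * τ.im) := by simp
  rw [this]
  have := Real.pi_pos
  nlinarith [mul_pos this hτ]

lemma differentiable_eexp : Differentiable ℂ eexp := by
  unfold eexp; fun_prop

lemma hasDerivAt_eexp_zero : HasDerivAt eexp (2 * π * Complex.I) 0 := by
  have := ((hasDerivAt_id (0 : ℂ)).const_mul (2 * π * Complex.I)).cexp
  simpa [eexp] using! this

/-! ### The product `∏_{n≥1} (1 - qⁿ x)` -/

/-- The `q`-product `∏_{n ≥ 1} (1 - qⁿ x)`, indexed from `n = 0` with exponent `n + 1`. It is entire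
in `x` when `‖q‖ < 1`. -/
noncomputable def qprod (q x : ℂ) : ℂ := ∏' n : ℕ, (1 - q ^ (n + 1) * x)

lemma summable_qprod {q : ℂ} (hq : ‖q‖ < 1) (x : ℂ) :
    Summable fun n : ℕ ↦ ‖-(q ^ (n + 1) * x)‖ := by
  simpa using ((summable_nat_add_iff 1).mpr
    (summable_geometric_of_lt_one (norm_nonneg _) hq)).mul_right ‖x‖

lemma multipliable_qprod {q : ℂ} (hq : ‖q‖ < 1) (x : ℂ) :
    Multipliable fun n : ℕ ↦ (1 - q ^ (n + 1) * x) := by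
  simpa [sub_eq_add_neg] using multipliable_one_add_of_summable (summable_qprod hq x)

lemma qprod_ne_zero {q x : ℂ} (hq : ‖q‖ < 1) (h : ∀ n : ℕ, q ^ (n + 1) * x ≠ 1) :
    qprod q x ≠ 0 := by
  have := tprod_one_add_ne_zero_of_summable (f := fun n : ℕ ↦ -(q ^ (n + 1) * x))
    (fun n hn ↦ h n (by linear_combination -hn)) (summable_qprod hq x)
  simpa [qprod, sub_eq_add_neg] using this

/-- Splitting off the first factor. This functional equation is the source of the quasi-periodicity
of the theta product under `z ↦ z + τ`. -/
lemma qprod_eq {q : ℂ} (hq : ‖q‖ < 1) (x : ℂ) :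
    qprod q x = (1 - q * x) * qprod q (q * x) := by
  have h := multipliable_qprod hq (q * x)
  rw [qprod, tprod_eq_zero_mul']
  · simp only [qprod, zero_add, pow_one]
    congr 2
    ext n
    ring
  · convert! h using 3 with n
    ring

lemma differentiable_qprod {q : ℂ} (hq : ‖q‖ < 1) : Differentiable ℂ (qprod q) := by
  intro x
  have hopen : IsOpen (Metric.ball (0 : ℂ) (‖x‖ + 1)) := Metric.isOpen_ball
  have hs : Summable fun n : ℕ ↦ ‖q‖ ^ (n + 1) * (‖x‖ + 1) :=
    ((summable_nat_add_iff 1).mpr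
      (summable_geometric_of_lt_one (norm_nonneg _) hq)).mul_right (‖x‖ + 1)
  have h := Summable.hasProdLocallyUniformlyOn_nat_one_add (f := fun (n : ℕ) x ↦ -(q ^ (n + 1) * x))
    hopen hs (.of_forall fun n y hy ↦ by
      have : ‖y‖ ≤ ‖x‖ + 1 := by simpa using (Metric.mem_ball.mp hy).le
      simp only [norm_neg, norm_mul, norm_pow]
      gcongr) (fun n ↦ by fun_prop)
  have h2 : DifferentiableOn ℂ (fun x ↦ ∏' n : ℕ, (1 + -(q ^ (n + 1) * x)))
      (Metric.ball (0 : ℂ) (‖x‖ + 1)) :=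
    h.differentiableOn (.of_forall fun _ ↦ by
      simpa [Finset.prod_fn] using DifferentiableOn.finsetProd (fun _ _ ↦ by fun_prop)) hopen
  have h3 := h2.differentiableAt (hopen.mem_nhds (x := x) (by simp))
  simpa [qprod, sub_eq_add_neg] using! h3

/-! ### The theta product -/

/-- The theta product `θ(z) = (1 - u) ∏_{n ≥ 1} (1 - qⁿ u)(1 - qⁿ u⁻¹)` with `u = e(z)`, `q = e(τ)`,
written as a product of two `q`-products: an entire function of `z` whose zeros are the points of
`ℤτ + ℤ`. -/
noncomputable def thetaProd (τ z : ℂ) : ℂ :=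
  (1 - eexp z) * qprod (eexp τ) (eexp z) * qprod (eexp τ) (eexp (-z))

section theta
variable {τ : ℂ}

lemma thetaProd_zero : thetaProd τ 0 = 0 := by simp [thetaProd, eexp_zero]

lemma thetaProd_add_one (z : ℂ) : thetaProd τ (z + 1) = thetaProd τ z := by
  simp [thetaProd, eexp_add, eexp_neg, eexp_one]

lemma thetaProd_neg (z : ℂ) : thetaProd τ (-z) = -eexp (-z) * thetaProd τ z := by
  have := eexp_ne_zero z
  simp only [thetaProd, neg_neg, eexp_neg]
  field_simp
  ring

lemma thetaProd_add_tau (hτ : 0 < τ.im) (z : ℂ) :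
    thetaProd τ (z + τ) = -eexp (-z) * thetaProd τ z := by
  have hq := norm_eexp_lt_one hτ
  have h1 := qprod_eq hq (eexp z)
  have h2 := qprod_eq hq (eexp (-(z + τ)))
  have e : eexp τ * eexp (-(z + τ)) = eexp (-z) := by
    rw [← eexp_add]; ring_nf
  rw [e] at h2
  have e2 : eexp (-z) * eexp z = 1 := by rw [← eexp_add]; simp [eexp_zero]
  rw [thetaProd, thetaProd, h2, h1, eexp_add, mul_comm (eexp z) (eexp τ)]
  linear_combination -(1 - eexp τ * eexp z) * qprod (eexp τ) (eexp τ * eexp z) *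
    qprod (eexp τ) (eexp (-z)) * e2

lemma differentiable_thetaProd (hτ : 0 < τ.im) : Differentiable ℂ (thetaProd τ) := by
  have h1 := differentiable_qprod (norm_eexp_lt_one hτ)
  have h2 := differentiable_eexp
  unfold thetaProd
  fun_prop

lemma thetaProd_ne_zero (hτ : 0 < τ.im) {z : ℂ} (hz : ∀ m n : ℤ, m * τ + n ≠ z) :
    thetaProd τ z ≠ 0 := by
  have hq := norm_eexp_lt_one hτ
  refine mul_ne_zero (mul_ne_zero ?_ (qprod_ne_zero hq fun n hn ↦ ?_))
    (qprod_ne_zero hq fun n hn ↦ ?_)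
  · intro h
    obtain ⟨n, hn⟩ := eexp_eq_one (sub_eq_zero.mp h).symm
    exact hz 0 n (by simp [hn])
  · rw [← eexp_nat_mul, ← eexp_add] at hn
    obtain ⟨k, hk⟩ := eexp_eq_one hn
    refine hz (-(n + 1)) k ?_
    push_cast at hk ⊢
    linear_combination -hk
  · rw [← eexp_nat_mul, ← eexp_add] at hn
    obtain ⟨k, hk⟩ := eexp_eq_one hn
    refine hz (n + 1) (-k) ?_
    push_cast at hk ⊢
    linear_combination hk

lemma hasDerivAt_thetaProd_zero (hτ : 0 < τ.im) :
    HasDerivAt (thetaProd τ) (-(2 * π * Complex.I) * qprod (eexp τ) 1 ^ 2) 0 := by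
  have h1 := differentiable_qprod (norm_eexp_lt_one hτ)
  have h2 := differentiable_eexp
  have hf : DifferentiableAt ℂ
      (fun z ↦ qprod (eexp τ) (eexp z) * qprod (eexp τ) (eexp (-z))) 0 := by fun_prop
  have := (hasDerivAt_eexp_zero.const_sub 1).mul hf.hasDerivAt
  simp only [neg_zero, eexp_zero, sub_self, zero_mul, add_zero] at this
  convert! this using 1
  · ext z; simp [thetaProd, mul_assoc]
  · ring

lemma qprod_one_ne_zero (hτ : 0 < τ.im) : qprod (eexp τ) 1 ≠ 0 := by
  refine qprod_ne_zero (norm_eexp_lt_one hτ) fun n hn ↦ ?_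
  have := pow_lt_one₀ (norm_nonneg _) (norm_eexp_lt_one hτ) n.succ_ne_zero
  rw [mul_one] at hn
  rw [← norm_pow, Nat.succ_eq_add_one, hn] at this
  simp at this

end theta

/-! ### Elliptic functions for `ℤτ + ℤ` -/

/-- The periods `τ, 1`, in the order that makes lattice points `mτ + n`, as in `latticePt`. -/
def tauPair (τ : ℂ) (hτ : 0 < τ.im) : PeriodPair where
  ω₁ := τ
  ω₂ := 1
  indep := by
    rw [LinearIndependent.pair_iff]
    intro s t h
    have hs : s = 0 := by
      have := congrArg Complex.im h
      simpa [hτ.ne'] using this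
    subst hs
    simpa using h

/-- The definition of `wp` sums over `ℤ × ℤ` without the origin; Mathlib's `℘` sums over the whole
lattice, where the junk value `1 / 0 = 0` makes the term of the origin equal to `1 / z²`. -/
lemma wp_eq_weierstrassP (τ : ℂ) (hτ : 0 < τ.im) (z : ℂ) :
    wp τ 1 z = (tauPair τ hτ).weierstrassP z := by
  set L := tauPair τ hτ with hL
  have h := L.weierstrassPExcept_def 0 z
  simp only [ZeroMemClass.coe_zero, ne_eq, OfNat.ofNat_ne_zero, not_false_eq_true, zero_pow,
    div_zero, sub_zero, zero_sub] at h
  have h' : L.weierstrassP z = 1 / z ^ 2 + L.weierstrassPExcept 0 z := by rw [h]; ring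
  rw [h', wp, PeriodPair.weierstrassPExcept, ← L.latticeEquivProd.symm.toEquiv.tsum_eq]
  congr 1
  refine (tsum_subtype {p : ℤ × ℤ | p ≠ 0}
    (fun p ↦ 1 / (z - latticePt τ 1 p) ^ 2 - 1 / latticePt τ 1 p ^ 2)).trans ?_
  congr 1
  ext p
  have hp : ((L.latticeEquivProd.symm p : L.lattice) : ℂ) = latticePt τ 1 p :=
    L.latticeEquiv_symm_apply p
  by_cases h0 : p = 0
  · simp [h0]
  · have : ((L.latticeEquivProd.symm p : L.lattice) : ℂ) ≠ 0 := by simpa using h0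
    rw [hp] at this
    simp [h0, hp, this]

/-- Liouville's theorem for elliptic functions: a function with periods in a lattice that is
holomorphic off the lattice and has a removable singularity at `0` (it agrees with `B` near `0`) is
constant off the lattice. -/
lemma elliptic_eq (L : PeriodPair) {H B : ℂ → ℂ}
    (hper : ∀ z, ∀ l ∈ L.lattice, H (z + l) = H z)
    (hd : DifferentiableOn ℂ H (L.lattice : Set ℂ)ᶜ)
    (hB : DifferentiableAt ℂ B 0) (hHB : ∀ᶠ z in 𝓝[≠] (0 : ℂ), H z = B z)
    {z w : ℂ} (hz : z ∉ L.lattice) (hw : w ∉ L.lattice) : H z = H w := by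
  classical
  -- The entire extension of `H`: its value at all lattice points is the value of `B` at `0`.
  let K : ℂ → ℂ := fun z ↦ if z ∈ L.lattice then B 0 else H z
  have hKper : ∀ z, ∀ l ∈ L.lattice, K (z + l) = K z := by
    intro z l hl
    simp only [K, hper z l hl, L.lattice.add_mem_iff_left hl]
  have hKd0 : DifferentiableAt ℂ K 0 := by
    refine hB.congr_of_eventuallyEq ?_
    rw [eventually_nhdsWithin_iff] at hHB
    filter_upwards [hHB, L.compl_lattice_sdiff_singleton_mem_nhds 0] with z h1 h2
    by_cases h0 : z = 0
    · simp [K, h0]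
    · have : z ∉ L.lattice := fun h ↦ h2 ⟨h, h0⟩
      simp [K, this, h1 h0]
  have hK : Differentiable ℂ K := by
    intro x
    by_cases hx : x ∈ L.lattice
    · have h1 : DifferentiableAt ℂ (fun z ↦ K (z - x)) x :=
        DifferentiableAt.comp (g := K) (f := fun z ↦ z - x) x (by simpa using hKd0) (by fun_prop)
      convert! h1 using 1
      ext z
      simpa using (hKper (z - x) x hx)
    · have hn := L.isClosed_lattice.isOpen_compl.mem_nhds hx
      refine (hd.differentiableAt hn).congr_of_eventuallyEq ?_
      filter_upwards [hn] with y hy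
      exact if_neg hy
  have := hK.apply_eq_apply_of_bounded (IsZLattice.isCompact_range_of_periodic L.lattice K
    hK.continuous hKper).isBounded z w
  simpa [K, hz, hw] using this

/-- The classical formula `℘(z) - ℘(w) = -σ(z + w) σ(z - w) / (σ(z)² σ(w)²)`, with the theta product
in place of the Weierstrass `σ`-function. -/
theorem weierstrassP_sub (τ : ℂ) (hτ : 0 < τ.im) {z w : ℂ}
    (hz : z ∉ (tauPair τ hτ).lattice) (hw : w ∉ (tauPair τ hτ).lattice) :
    (tauPair τ hτ).weierstrassP z - (tauPair τ hτ).weierstrassP w =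
      4 * π ^ 2 * qprod (eexp τ) 1 ^ 4 * eexp w * thetaProd τ (z + w) * thetaProd τ (z - w) /
        (thetaProd τ z ^ 2 * thetaProd τ w ^ 2) := by
  set L := tauPair τ hτ with hL
  have hθ : ∀ x, x ∉ L.lattice → thetaProd τ x ≠ 0 := fun x hx ↦
    thetaProd_ne_zero hτ fun m n h ↦ hx <| PeriodPair.mem_lattice.mpr ⟨m, n, by
      rw [← h]; simp [hL, tauPair]⟩
  have hθd := differentiable_thetaProd hτ
  set c : ℂ := -(2 * π * Complex.I) * qprod (eexp τ) 1 ^ 2 with hc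
  have hc0 : c ≠ 0 := mul_ne_zero (neg_ne_zero.mpr Complex.two_pi_I_ne_zero)
    (pow_ne_zero _ (qprod_one_ne_zero hτ))
  have hc2 : c ^ 2 = -(4 * π ^ 2 * qprod (eexp τ) 1 ^ 4) := by
    rw [hc]; linear_combination (4 * π ^ 2 * qprod (eexp τ) 1 ^ 4) * Complex.I_sq
  -- `C` makes the coefficients of `1 / x²` at `0` in `℘(x) - ℘(w)` and in `C * G x` agree.
  set C : ℂ := -c ^ 2 * eexp w / thetaProd τ w ^ 2 with hC
  let G : ℂ → ℂ := fun x ↦ thetaProd τ (x + w) * thetaProd τ (x - w) / thetaProd τ x ^ 2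
  let H : ℂ → ℂ := fun x ↦ L.weierstrassP x - L.weierstrassP w - C * G x
  have hG1 : Function.Periodic G 1 := fun x ↦ by
    simp only [G]
    rw [add_right_comm, add_sub_right_comm]
    simp only [thetaProd_add_one]
  have hGτ : Function.Periodic G τ := fun x ↦ by
    simp only [G]
    rw [add_right_comm, add_sub_right_comm]
    simp only [thetaProd_add_tau hτ]
    have e : eexp (-(x + w)) * eexp (-(x - w)) = eexp (-x) ^ 2 := by
      rw [sq, ← eexp_add, ← eexp_add]; ring_nf
    have := eexp_ne_zero (-x)
    rw [show -eexp (-(x + w)) * thetaProd τ (x + w) * (-eexp (-(x - w)) * thetaProd τ (x - w)) =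
      (eexp (-(x + w)) * eexp (-(x - w))) * (thetaProd τ (x + w) * thetaProd τ (x - w)) by ring, e,
      mul_pow, neg_sq, mul_div_mul_left _ _ (pow_ne_zero 2 this)]
  have hper : ∀ x, ∀ l ∈ L.lattice, H (x + l) = H x := by
    intro x l hl
    have h1 : L.weierstrassP (x + l) = L.weierstrassP x := L.weierstrassP_add_coe x ⟨l, hl⟩
    obtain ⟨m, n, rfl⟩ := PeriodPair.mem_lattice.mp hl
    have h2 : G (x + (m * τ + n * 1)) = G x := ((hGτ.int_mul m).add_period (hG1.int_mul n)) x
    simp only [H, h1]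
    congr 2
  have hd : DifferentiableOn ℂ H (L.lattice : Set ℂ)ᶜ := by
    have := L.differentiableOn_weierstrassP
    have hG : DifferentiableOn ℂ G (L.lattice : Set ℂ)ᶜ :=
      DifferentiableOn.div (by fun_prop) (by fun_prop) fun x hx ↦ pow_ne_zero 2 (hθ x hx)
    fun_prop
  let ψ : ℂ → ℂ := dslope (thetaProd τ) 0
  have hψd : Differentiable ℂ ψ := by
    rw [← differentiableOn_univ]
    exact (Complex.differentiableOn_dslope Filter.univ_mem).mpr hθd.differentiableOn
  have hψ0 : ψ 0 = c := by
    simp only [ψ, dslope_same]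
    exact (hasDerivAt_thetaProd_zero hτ).deriv
  have hψ : ∀ x, thetaProd τ x = x * ψ x := fun x ↦ by
    have := sub_smul_dslope (thetaProd τ) 0 x
    simpa [thetaProd_zero] using this.symm
  have hψneg : ∀ x, ψ (-x) = eexp (-x) * ψ x := by
    intro x
    rcases eq_or_ne x 0 with rfl | hx
    · simp [eexp_zero]
    · have := thetaProd_neg (τ := τ) x
      rw [hψ, hψ] at this
      apply mul_left_cancel₀ hx
      linear_combination -this
  -- `A x = x² H x` away from the lattice, with the double pole at `0` cancelled.
  let A : ℂ → ℂ := fun x ↦ 1 + x ^ 2 * (L.weierstrassPExcept 0 x - L.weierstrassP w) -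
    C * (thetaProd τ (x + w) * thetaProd τ (x - w) / ψ x ^ 2)
  have hAeven : ∀ x, A (-x) = A x := by
    intro x
    have h1 : thetaProd τ (-x + w) = -eexp (-(x - w)) * thetaProd τ (x - w) := by
      rw [← thetaProd_neg]; ring_nf
    have h2 : thetaProd τ (-x - w) = -eexp (-(x + w)) * thetaProd τ (x + w) := by
      rw [← thetaProd_neg]; ring_nf
    have e : eexp (-(x - w)) * eexp (-(x + w)) = eexp (-x) ^ 2 := by
      rw [sq, ← eexp_add, ← eexp_add]; ring_nf
    have := eexp_ne_zero (-x)
    simp only [A, L.weierstrassPExcept_neg, h1, h2, hψneg, neg_zero, neg_sq]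
    rw [show -eexp (-(x - w)) * thetaProd τ (x - w) * (-eexp (-(x + w)) * thetaProd τ (x + w)) =
      (eexp (-(x - w)) * eexp (-(x + w))) * (thetaProd τ (x + w) * thetaProd τ (x - w)) by ring, e,
      mul_pow, mul_div_mul_left _ _ (pow_ne_zero 2 this)]
  have hA0 : A 0 = 0 := by
    have := hθ w hw
    have e : eexp w * eexp (-w) = 1 := by rw [← eexp_add]; simp [eexp_zero]
    simp only [A, hψ0, zero_add, zero_sub, thetaProd_neg, hC]
    field_simp
    linear_combination -e
  let U : Set ℂ := {x | ψ x ≠ 0} ∩ ((L.lattice : Set ℂ) \ {0})ᶜ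
  have hU : U ∈ 𝓝 (0 : ℂ) :=
    Filter.inter_mem (hψd.continuous.continuousAt.eventually_ne (by rw [hψ0]; exact hc0))
      (L.compl_lattice_sdiff_singleton_mem_nhds 0)
  have hAd : DifferentiableOn ℂ A U := by
    have h1 : DifferentiableOn ℂ (L.weierstrassPExcept 0) U :=
      (L.differentiableOn_weierstrassPExcept 0).mono Set.inter_subset_right
    have h2 : DifferentiableOn ℂ
        (fun x ↦ thetaProd τ (x + w) * thetaProd τ (x - w) / ψ x ^ 2) U :=
      DifferentiableOn.div (by fun_prop) (by fun_prop) fun x hx ↦ pow_ne_zero 2 hx.1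
    fun_prop
  -- As `A` is even with `A 0 = 0`, it vanishes to second order, so `A x / x²` is holomorphic at `0`.
  have hA' : deriv A 0 = 0 := by
    have h := deriv_comp_neg A 0
    rw [funext hAeven, neg_zero] at h
    exact CharZero.eq_neg_self_iff.mp h
  have hBd : DifferentiableAt ℂ (dslope (dslope A 0) 0) 0 :=
    (((Complex.differentiableOn_dslope hU).mpr
      ((Complex.differentiableOn_dslope hU).mpr hAd))).differentiableAt hU
  have hHB : ∀ᶠ x in 𝓝[≠] (0 : ℂ), H x = dslope (dslope A 0) 0 x := by
    filter_upwards [self_mem_nhdsWithin] with x hx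
    have hx0 : x ≠ 0 := hx
    have h1 := sub_smul_dslope A 0 x
    have h2 := sub_smul_dslope (dslope A 0) 0 x
    rw [dslope_same, hA'] at h2
    simp only [sub_zero, smul_eq_mul, hA0] at h1 h2
    have h3 : L.weierstrassP x = L.weierstrassPExcept 0 x + 1 / x ^ 2 := by
      simpa using (L.weierstrassPExcept_add 0 x).symm
    have h4 : x ^ 2 * H x = A x := by
      simp only [H, A, G, h3, hψ x]
      field_simp
      ring
    apply mul_left_cancel₀ (pow_ne_zero 2 hx0)
    linear_combination h4 - h1 - x * h2
  have key := elliptic_eq L hper hd hBd hHB hz hw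
  -- The constant is evaluated at `x = w`, where `℘(x) - ℘(w)` and `θ(x - w)` both vanish.
  have hHw : H w = 0 := by simp [H, G, thetaProd_zero]
  rw [hHw] at key
  simp only [H, G, hC, hc2] at key
  have := hθ w hw
  have := hθ z hz
  rw [sub_eq_zero] at key
  rw [key]
  field_simp

/-! ### The Siegel and eta functions in terms of the theta product -/

lemma eta_eq (τ : ℂ) : eta τ ^ 4 = -(4 * π ^ 2) * eexp (τ / 6) * qprod (eexp τ) 1 ^ 4 := by
  have h : (∏' n : ℕ, (1 - qpow τ (n + 1 : ℝ))) = qprod (eexp τ) 1 := by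
    rw [qprod]
    congr 1
    ext n
    rw [mul_one, ← eexp_nat_mul, qpow, eexp]
    push_cast
    ring_nf
  have h1 : (Real.sqrt (2 * π) : ℂ) ^ 4 = 4 * π ^ 2 := by
    have : (Real.sqrt (2 * π)) ^ 4 = 4 * π ^ 2 := by
      have := Real.sq_sqrt (show 0 ≤ 2 * π by positivity)
      linear_combination (Real.sqrt (2 * π) ^ 2 + 2 * π) * this
    exact_mod_cast this
  have h2 : Complex.exp (π * Complex.I / 4) ^ 4 = -1 := by
    rw [← Complex.exp_nat_mul, ← Complex.exp_pi_mul_I]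
    congr 1
    push_cast
    ring
  have h3 : qpow τ (1 / 24) ^ 4 = eexp (τ / 6) := by
    rw [qpow, ← Complex.exp_nat_mul, eexp]
    congr 1
    push_cast
    ring
  rw [eta, h, mul_pow, mul_pow, mul_pow, h1, h2, h3]
  ring

lemma siegel_eq {τ : ℂ} (hτ : 0 < τ.im) (r s : ℚ) :
    siegel r s τ = -eexp ((r ^ 2 - r + 1 / 6) / 2 * τ + s * (r - 1) / 2) *
      thetaProd τ (r * τ + s) := by
  have hq := norm_eexp_lt_one hτ
  have h1 : qpow τ r * Complex.exp (2 * π * Complex.I * s) = eexp (r * τ + s) := by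
    rw [qpow, ← Complex.exp_add, eexp]
    congr 1
    push_cast
    ring
  have h2 : qpow τ ((1/2) * ((r : ℝ) ^ 2 - (r : ℝ) + 1/6)) *
      Complex.exp (π * Complex.I * s * (r - 1)) =
      eexp ((r ^ 2 - r + 1 / 6) / 2 * τ + s * (r - 1) / 2) := by
    rw [qpow, ← Complex.exp_add, eexp]
    congr 1
    push_cast
    ring
  have h3 (n : ℕ) : qpow τ ((n + 1 : ℝ) + (r : ℝ)) * Complex.exp (2 * π * Complex.I * s) =
      eexp τ ^ (n + 1) * eexp (r * τ + s) := by
    rw [← eexp_nat_mul, qpow, eexp, eexp, ← Complex.exp_add, ← Complex.exp_add]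
    congr 1
    push_cast
    ring
  have h4 (n : ℕ) : qpow τ ((n + 1 : ℝ) - (r : ℝ)) * Complex.exp (-(2 * π * Complex.I * s)) =
      eexp τ ^ (n + 1) * eexp (-(r * τ + s)) := by
    rw [← eexp_nat_mul, qpow, eexp, eexp, ← Complex.exp_add, ← Complex.exp_add]
    congr 1
    push_cast
    ring
  rw [siegel, h1, neg_mul, h2, thetaProd]
  simp only [h3, h4]
  rw [(multipliable_qprod hq _).tprod_mul (multipliable_qprod hq _)]
  simp only [qprod]
  ring

/-! ### Comparison of the exponential factors -/

theorem wprs_sub_wprs_eq_siegel_expression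
    (a b c d : ℚ)
    (hab : ¬ ∃ p q : ℤ, a = (p : ℚ) ∧ b = (q : ℚ))
    (hcd : ¬ ∃ p q : ℤ, c = (p : ℚ) ∧ d = (q : ℚ))
    (hsub : ¬ ∃ p q : ℤ, a - c = (p : ℚ) ∧ b - d = (q : ℚ))
    (hadd : ¬ ∃ p q : ℤ, a + c = (p : ℚ) ∧ b + d = (q : ℚ))
    (τ : UpperHalfPlane) :
    wprs a b τ - wprs c d τ =
      -(siegel (a + c) (b + d) τ * siegel (a - c) (b - d) τ * eta τ ^ 4) /
        (siegel a b τ ^ 2 * siegel c d τ ^ 2) := by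
  have hτ : 0 < (τ : ℂ).im := τ.im_pos
  have hmem : ∀ r s : ℚ, (¬ ∃ p q : ℤ, r = (p : ℚ) ∧ s = (q : ℚ)) →
      (r : ℂ) * τ + s ∉ (tauPair τ hτ).lattice := by
    intro r s h hl
    have : (r : ℂ) * (tauPair τ hτ).ω₁ + s * (tauPair τ hτ).ω₂ ∈ (tauPair τ hτ).lattice := by
      simpa [tauPair] using hl
    obtain ⟨h1, h2⟩ := PeriodPair.mul_ω₁_add_mul_ω₂_mem_lattice.mp this
    exact h ⟨r.num, s.num, (Rat.den_eq_one_iff r).mp h1 |>.symm,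
      (Rat.den_eq_one_iff s).mp h2 |>.symm⟩
  rw [wprs, wprs, wp_eq_weierstrassP _ hτ, wp_eq_weierstrassP _ hτ,
    weierstrassP_sub _ hτ (hmem a b hab) (hmem c d hcd), eta_eq]
  simp only [siegel_eq hτ]
  push_cast
  have hzw : ((a : ℂ) + c) * τ + (b + d) = (a * τ + b) + (c * τ + d) := by ring
  have hzw' : ((a : ℂ) - c) * τ + (b - d) = (a * τ + b) - (c * τ + d) := by ring
  rw [hzw, hzw']
  set z : ℂ := a * τ + b
  set w : ℂ := c * τ + d with hw
  set Ea : ℂ := eexp (((a : ℂ) ^ 2 - a + 1 / 6) / 2 * τ + b * (a - 1) / 2) with hEa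
  set Ec : ℂ := eexp (((c : ℂ) ^ 2 - c + 1 / 6) / 2 * τ + d * (c - 1) / 2) with hEc
  set E1 : ℂ := eexp ((((a : ℂ) + c) ^ 2 - (a + c) + 1 / 6) / 2 * τ +
    (b + d) * ((a + c) - 1) / 2) with hE1
  set E2 : ℂ := eexp ((((a : ℂ) - c) ^ 2 - (a - c) + 1 / 6) / 2 * τ +
    (b - d) * ((a - c) - 1) / 2) with hE2
  -- The quadratic exponents obey the parallelogram law, which leaves only the factor `e(w)`.
  have hE : E1 * E2 * eexp ((τ : ℂ) / 6) = eexp w * (Ea ^ 2 * Ec ^ 2) := by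
    simp only [hEa, hEc, hE1, hE2, hw, sq (eexp _), ← eexp_add]
    congr 1
    ring
  have hEa0 : Ea ≠ 0 := eexp_ne_zero _
  have hEc0 : Ec ≠ 0 := eexp_ne_zero _
  have hnum : -(-E1 * thetaProd τ (z + w) * (-E2 * thetaProd τ (z - w)) *
      (-(4 * π ^ 2) * eexp ((τ : ℂ) / 6) * qprod (eexp τ) 1 ^ 4)) =
      (Ea ^ 2 * Ec ^ 2) * (4 * π ^ 2 * qprod (eexp τ) 1 ^ 4 * eexp w * thetaProd τ (z + w) *
        thetaProd τ (z - w)) := by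
    linear_combination (4 * π ^ 2 * qprod (eexp τ) 1 ^ 4 * thetaProd τ (z + w) *
        thetaProd τ (z - w)) * hE
  have hden : (-Ea * thetaProd τ z) ^ 2 * (-Ec * thetaProd τ w) ^ 2 =
      (Ea ^ 2 * Ec ^ 2) * (thetaProd τ z ^ 2 * thetaProd τ w ^ 2) := by ring
  rw [hnum, hden, mul_div_mul_left _ _ (mul_ne_zero (pow_ne_zero 2 hEa0) (pow_ne_zero 2 hEc0))]
end
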